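/- arXiv:2311.02919 — 3 statements merged into one kernel-verified Lean document; each statement's English description precedes it below -/
import Mathlib

section
/- Let p be a prime and r ≥ p+1 an integer. The 𝔽_p-linear map ψ : V_r → ind_{B(𝔽_p)}^{GL₂(𝔽_p)} d^r sending a homogeneous polynomial P to the function ψ_P defined by ψ_P([[a,b],[c,d]]) = P(c,d) is GL₂(𝔽_p)-equivariant and surjective, and its kernel is exactly V_r*; consequently ψ induces an isomorphism of GL₂(𝔽_p)-representations V_r/V_r* ≅ ind_{B(𝔽_p)}^{GL₂(𝔽_p)} d^r. -/
/-!
Common setup: the symmetric power representations `V_r` of `GL₂(𝔽_p)` realized as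
homogeneous polynomials of degree `r` in `𝔽_p[X,Y]`, the action
`([[a,b],[c,d]]·P)(X,Y) = P(aX+cY, bX+dY)`, and the subrepresentation `V_r*` of
polynomials divisible by `X^p Y − X Y^p`.
-/

set_option synthInstance.maxHeartbeats 1000000
set_option maxHeartbeats 1000000

open MvPolynomial

variable (p : ℕ) [Fact p.Prime]

/-- The action of a 2×2 matrix M on polynomials: for M = [[a,b],[c,d]],
`(M·P)(X,Y) = P(aX+cY, bX+dY)`; here the variable `X i` is sent to `Σ_j M j i • X j`. -/
noncomputable def polyAct (M : Matrix (Fin 2) (Fin 2) (ZMod p)) :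
    MvPolynomial (Fin 2) (ZMod p) →ₗ[ZMod p] MvPolynomial (Fin 2) (ZMod p) :=
  (aeval fun i => ∑ j, C (M j i) * X j).toLinearMap

/-- `V_r`: homogeneous polynomials of degree r in 𝔽_p[X,Y]. -/
noncomputable def Vpoly (r : ℕ) : Submodule (ZMod p) (MvPolynomial (Fin 2) (ZMod p)) :=
  homogeneousSubmodule (Fin 2) (ZMod p) r

/-- `V_r*`: elements of `V_r` divisible by `X^p Y − X Y^p`. -/
noncomputable def VpolyStar (r : ℕ) : Submodule (ZMod p) (MvPolynomial (Fin 2) (ZMod p)) :=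
  Vpoly p r ⊓ Submodule.restrictScalars (ZMod p)
    (Ideal.span {(X 0 : MvPolynomial (Fin 2) (ZMod p)) ^ p * X 1 - X 0 * X 1 ^ p})

/-- The Borel subgroup B(𝔽_p) of upper triangular matrices, as a subset of GL₂(𝔽_p). -/
def Bset : Set (GL (Fin 2) (ZMod p)) :=
  {b | (b : Matrix (Fin 2) (Fin 2) (ZMod p)) 1 0 = 0}

/-- The induced representation ind_{B(𝔽_p)}^{GL₂(𝔽_p)} d^r: functions f with
`f(bg) = d^r(b) f(g)` for all upper triangular b, where `d^r([[a,b],[0,d]]) = d^r`. -/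
def IndB (r : ℕ) : Set (GL (Fin 2) (ZMod p) → ZMod p) :=
  {f | ∀ b ∈ Bset p, ∀ g : GL (Fin 2) (ZMod p),
    f (b * g) = ((b : Matrix (Fin 2) (Fin 2) (ZMod p)) 1 1) ^ r * f g}

/-- The map ψ : P ↦ (g ↦ P(c,d)), evaluating P at the bottom row of g. -/
noncomputable def psi (P : MvPolynomial (Fin 2) (ZMod p)) :
    GL (Fin 2) (ZMod p) → ZMod p :=
  fun g => eval (fun j => (g : Matrix (Fin 2) (Fin 2) (ZMod p)) 1 j) P

noncomputable section Helpers

/-- The polynomial `X^p Y - X Y^p`. -/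
def thetaPoly : MvPolynomial (Fin 2) (ZMod p) := X 0 ^ p * X 1 - X 0 * X 1 ^ p

/-- A matrix with bottom row `(t, 1)`. -/
def gAff (t : ZMod p) : GL (Fin 2) (ZMod p) :=
  Matrix.GeneralLinearGroup.mkOfDetNeZero !![1, 0; t, 1] (by simp)

/-- A matrix with bottom row `(1, 0)`. -/
def gInf : GL (Fin 2) (ZMod p) :=
  Matrix.GeneralLinearGroup.mkOfDetNeZero !![0, 1; 1, 0] (by simp)

theorem gAff_val (t : ZMod p) :
    (gAff p t : Matrix (Fin 2) (Fin 2) (ZMod p)) = !![1, 0; t, 1] := rfl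

theorem gInf_val :
    (gInf p : Matrix (Fin 2) (Fin 2) (ZMod p)) = !![0, 1; 1, 0] := rfl

theorem psi_gAff (P : MvPolynomial (Fin 2) (ZMod p)) (t : ZMod p) :
    psi p P (gAff p t) = eval ![t, 1] P := by
  unfold psi
  congr 2

theorem psi_gInf (P : MvPolynomial (Fin 2) (ZMod p)) :
    psi p P (gInf p) = eval ![1, 0] P := by
  unfold psi
  congr 2

/-- Every matrix is a Borel element times one of the representatives. -/
theorem borel_decomp (g : GL (Fin 2) (ZMod p)) :
    ∃ b ∈ Bset p, g = b * gInf p ∨ ∃ t, g = b * gAff p t := by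
  by_cases hd : (g : Matrix (Fin 2) (Fin 2) (ZMod p)) 1 1 = 0
  · refine ⟨g * (gInf p)⁻¹, ?_, Or.inl (by simp)⟩
    have h : (gInf p)⁻¹ = gInf p := by
      rw [inv_eq_iff_mul_eq_one]
      ext i j
      fin_cases i <;> fin_cases j <;> simp [gInf_val, Matrix.mul_apply]
    simp [h, Bset, gInf_val, Matrix.mul_apply, hd]
  · set t : ZMod p := (g : Matrix (Fin 2) (Fin 2) (ZMod p)) 1 0 /
      (g : Matrix (Fin 2) (Fin 2) (ZMod p)) 1 1 with ht
    refine ⟨g * (gAff p t)⁻¹, ?_, Or.inr ⟨t, by simp⟩⟩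
    have h : (gAff p t)⁻¹ = gAff p (-t) := by
      rw [inv_eq_iff_mul_eq_one]
      ext i j
      fin_cases i <;> fin_cases j <;> simp [gAff_val, Matrix.mul_apply]
    rw [h]
    simp only [Bset, Set.mem_setOf_eq, Matrix.GeneralLinearGroup.coe_mul, gAff_val,
      Matrix.mul_apply, Fin.sum_univ_two]
    simp only [Matrix.of_apply, Matrix.cons_val', Matrix.cons_val_zero, Matrix.cons_val_one,
      Matrix.cons_val_fin_one]
    rw [ht]
    field_simp
    ring

theorem IndB_ext (r : ℕ) {f f' : GL (Fin 2) (ZMod p) → ZMod p} (hf : f ∈ IndB p r)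
    (hf' : f' ∈ IndB p r) (h1 : f (gInf p) = f' (gInf p))
    (h2 : ∀ t, f (gAff p t) = f' (gAff p t)) : f = f' := by
  funext g
  obtain ⟨b, hb, h | ⟨t, h⟩⟩ := borel_decomp p g
  · rw [h, hf b hb, hf' b hb, h1]
  · rw [h, hf b hb, hf' b hb, h2]

theorem psi_mem (r : ℕ) (P : MvPolynomial (Fin 2) (ZMod p)) (hP : P ∈ Vpoly p r) :
    psi p P ∈ IndB p r := by
  intro b hb g
  have hP' : P.IsHomogeneous r := hP
  have hb' : (b : Matrix (Fin 2) (Fin 2) (ZMod p)) 1 0 = 0 := hb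
  unfold psi
  have : (fun j => ((b * g : GL (Fin 2) (ZMod p)) : Matrix (Fin 2) (Fin 2) (ZMod p)) 1 j) =
      fun j => (b : Matrix (Fin 2) (Fin 2) (ZMod p)) 1 1 *
        (g : Matrix (Fin 2) (Fin 2) (ZMod p)) 1 j := by
    funext j
    simp [Matrix.mul_apply, hb']
  rw [this]
  generalize (b : Matrix (Fin 2) (Fin 2) (ZMod p)) 1 1 = d
  rw [eval_eq', eval_eq', Finset.mul_sum]
  refine Finset.sum_congr rfl fun e he => ?_
  have he' : e 0 + e 1 = r := by
    have := hP' (mem_support_iff.1 he)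
    rw [← this]
    simp [Finsupp.weight_apply, Finsupp.sum_fintype]
  rw [Fin.prod_univ_two, Fin.prod_univ_two, ← he']
  ring

theorem psi_equiv (h : GL (Fin 2) (ZMod p)) (P : MvPolynomial (Fin 2) (ZMod p)) :
    psi p (polyAct p ((h : Matrix (Fin 2) (Fin 2) (ZMod p))) P) =
        fun g => psi p P (g * h) := by
  funext g
  unfold psi polyAct
  simp only [AlgHom.toLinearMap_apply]
  rw [← MvPolynomial.coe_aeval_eq_eval, ← MvPolynomial.coe_aeval_eq_eval]
  change (aeval _) ((aeval _) P) = aeval _ P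
  rw [← AlgHom.comp_apply, comp_aeval]
  congr 2
  funext j
  simp [Matrix.mul_apply, mul_comm]

theorem psi_surj (r : ℕ) (hr : p + 1 ≤ r) (f : GL (Fin 2) (ZMod p) → ZMod p)
    (hf : f ∈ IndB p r) : ∃ P ∈ Vpoly p r, psi p P = f := by
  have hp : 2 ≤ p := (Fact.out : p.Prime).two_le
  have hY : (X 1 : MvPolynomial (Fin 2) (ZMod p)).IsHomogeneous 1 := isHomogeneous_X _ _
  have hX : (X 0 : MvPolynomial (Fin 2) (ZMod p)).IsHomogeneous 1 := isHomogeneous_X _ _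
  have hr' : r = 1 * (r - p + 1) + 1 * (p - 1) := by omega
  let Q : ZMod p → MvPolynomial (Fin 2) (ZMod p) := fun t =>
    X 1 ^ (r - p + 1) * (X 1 ^ (p - 1) - (X 0 - C t * X 1) ^ (p - 1))
  let R : MvPolynomial (Fin 2) (ZMod p) := X 0 ^ (r - p + 1) * (X 0 ^ (p - 1) - X 1 ^ (p - 1))
  have hQ : ∀ t, Q t ∈ Vpoly p r := by
    intro t
    change (Q t).IsHomogeneous r
    rw [hr']
    refine (hY.pow _).mul ((hY.pow _).sub (IsHomogeneous.pow (hX.sub ?_) _))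
    simpa using (isHomogeneous_C (Fin 2) t).mul hY
  have hR : R ∈ Vpoly p r := by
    change R.IsHomogeneous r
    rw [hr']
    exact (hX.pow _).mul ((hX.pow _).sub (hY.pow _))
  have hmem : f (gInf p) • R + ∑ t, f (gAff p t) • Q t ∈ Vpoly p r :=
    Submodule.add_mem _ (Submodule.smul_mem _ _ hR)
      (Submodule.sum_mem _ fun t _ => Submodule.smul_mem _ _ (hQ t))
  have hpow : ∀ s : ZMod p, s ^ (p - 1) = if s = 0 then 0 else 1 := by
    intro s
    split_ifs with h
    · rw [h, zero_pow (by omega)]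
    · exact ZMod.pow_card_sub_one_eq_one h
  refine ⟨_, hmem, IndB_ext p r (psi_mem p r _ hmem) hf ?_ ?_⟩
  · rw [psi_gInf]
    have : p - 1 ≠ 0 := by omega
    simp [Q, R, smul_eval, this]
  · intro s
    rw [psi_gAff]
    simp only [Q, R, smul_eval, map_add, map_sum, map_mul, map_sub, map_pow, eval_X, eval_C,
      Matrix.cons_val_zero, Matrix.cons_val_one, hpow]
    have h1 : s ^ (r - p + 1) * ((if s = 0 then 0 else 1) - if (1 : ZMod p) = 0 then 0 else 1) = 0 := by
      by_cases h : s = 0 <;> simp [h]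
    rw [h1]
    rw [Finset.sum_eq_single s]
    · simp
    · intro t _ hts
      have : s - t ≠ 0 := sub_ne_zero.2 (Ne.symm hts)
      simp [this]
    · simp

theorem eval_theta (v : Fin 2 → ZMod p) : eval v (thetaPoly p) = 0 := by
  simp [thetaPoly]

/-- Linear combination of low-degree monomials. -/
def lowMap (r : ℕ) : (Fin p → ZMod p) →ₗ[ZMod p] MvPolynomial (Fin 2) (ZMod p) :=
  Fintype.linearCombination (ZMod p) (fun i : Fin p => X 0 ^ (i : ℕ) * X 1 ^ (r - i))

/-- The span of the remainders and the multiples of theta. -/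
def Wsub (r : ℕ) : Submodule (ZMod p) (MvPolynomial (Fin 2) (ZMod p)) :=
  Submodule.restrictScalars (ZMod p) (Ideal.span {thetaPoly p}) ⊔
    (Submodule.span (ZMod p) {X 0 ^ r} ⊔ LinearMap.range (lowMap p r))

theorem monom_mem (r : ℕ) (a : ℕ) : ∀ b, a + b = r →
    (X 0 ^ a * X 1 ^ b : MvPolynomial (Fin 2) (ZMod p)) ∈ Wsub p r := by
  have hp : 2 ≤ p := (Fact.out : p.Prime).two_le
  induction a using Nat.strong_induction_on with
  | _ a ih =>
    intro b hab
    by_cases ha : a < p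
    · refine Submodule.mem_sup_right (Submodule.mem_sup_right ⟨Pi.single ⟨a, ha⟩ 1, ?_⟩)
      have : r - a = b := by omega
      simp [lowMap, Fintype.linearCombination_apply_single, this]
    · rcases b with _ | b
      · refine Submodule.mem_sup_right (Submodule.mem_sup_left ?_)
        have : a = r := by omega
        simpa [this] using Submodule.mem_span_singleton_self _
      · have h1 := ih (a - p + 1) (by omega) (b + p) (by omega)
        have h2 : (X 0 ^ (a - p) * X 1 ^ b * thetaPoly p : MvPolynomial (Fin 2) (ZMod p))
            ∈ Wsub p r :=
          Submodule.mem_sup_left (Ideal.mul_mem_left _ _ (Ideal.mem_span_singleton_self _))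
        have h3 := Submodule.add_mem _ h1 h2
        convert h3 using 1
        obtain ⟨c, rfl⟩ : ∃ c, a = c + p := ⟨a - p, by omega⟩
        simp only [Nat.add_sub_cancel, thetaPoly]
        ring

theorem mem_Wsub (r : ℕ) (P : MvPolynomial (Fin 2) (ZMod p)) (hP : P ∈ Vpoly p r) :
    P ∈ Wsub p r := by
  have hP' : P.IsHomogeneous r := hP
  rw [P.as_sum]
  refine Submodule.sum_mem _ fun d hd => ?_
  have hd' : d 0 + d 1 = r := by
    have := hP' (mem_support_iff.1 hd)
    rw [← this]
    simp [Finsupp.weight_apply, Finsupp.sum_fintype]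
  have := Submodule.smul_mem _ (coeff d P) (monom_mem p r (d 0) (d 1) hd')
  convert this using 1
  rw [monomial_eq, smul_eq_C_mul, Finsupp.prod_fintype _ _ (by simp)]
  simp

theorem ker_mem (r : ℕ) (hr : p + 1 ≤ r) (P : MvPolynomial (Fin 2) (ZMod p))
    (hP : P ∈ Vpoly p r) (h0 : psi p P = 0) : P ∈ Ideal.span {thetaPoly p} := by
  obtain ⟨T, hT, S, hS, rfl⟩ := Submodule.mem_sup.1 (mem_Wsub p r P hP)
  obtain ⟨A, hA, B, ⟨q, rfl⟩, rfl⟩ := Submodule.mem_sup.1 hS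
  obtain ⟨c, rfl⟩ := Submodule.mem_span_singleton.1 hA
  have hT' : T ∈ Ideal.span {thetaPoly p} := hT
  have hTe : ∀ v, eval v T = 0 := by
    intro v
    obtain ⟨u, rfl⟩ := Ideal.mem_span_singleton.1 hT'
    simp [eval_theta]
  have hInf := congrFun h0 (gInf p)
  have hAff := fun t => congrFun h0 (gAff p t)
  simp only [psi_gInf, psi_gAff, map_add, hTe, lowMap, Fintype.linearCombination_apply, map_sum,
    smul_eval, map_mul, map_pow, eval_X, Pi.zero_apply, Matrix.cons_val_zero,
    Matrix.cons_val_one, one_pow, mul_one, one_mul, zero_add] at hInf hAff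
  have hc : c = 0 := by
    rw [Finset.sum_eq_zero, add_zero] at hInf
    · exact hInf
    · intro i _
      have := i.2
      rw [zero_pow (by omega), mul_zero]
  subst hc
  have hq : q = 0 := by
    let F : Polynomial (ZMod p) := ∑ i : Fin p, Polynomial.C (q i) * Polynomial.X ^ (i : ℕ)
    have hF : F = 0 := by
      by_contra hne
      apply hne
      refine Polynomial.eq_zero_of_natDegree_lt_card_of_eval_eq_zero F
        (f := (id : ZMod p → ZMod p)) Function.injective_id ?_ ?_
      · intro t
        have := hAff t
        simpa [F, Polynomial.eval_finset_sum] using this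
      · rw [ZMod.card]
        have : F.degree < p := by
          refine Polynomial.degree_sum_fin_lt q
        exact (Polynomial.natDegree_lt_iff_degree_lt hne).2 this
    funext i
    have := congrArg (fun G => Polynomial.coeff G (i : ℕ)) hF
    simpa [F, Polynomial.finset_sum_coeff, Polynomial.coeff_C_mul, Polynomial.coeff_X_pow,
      Fin.val_inj] using this
  subst hq
  simpa using hT'

end Helpers

/-- For r ≥ p+1, the map ψ : V_r → ind_{B(𝔽_p)}^{GL₂(𝔽_p)} d^r,
ψ_P(g) = P(c,d) (evaluation at the bottom row), is a GL₂(𝔽_p)-equivariant surjective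
𝔽_p-linear map with kernel exactly V_r*; consequently it induces an isomorphism
V_r/V_r* ≅ ind_{B(𝔽_p)}^{GL₂(𝔽_p)} d^r. -/
theorem stmt0 (p : ℕ) [Fact p.Prime] (r : ℕ) (hr : p + 1 ≤ r) :
    -- ψ takes values in the induced representation
    (∀ P ∈ Vpoly p r, psi p P ∈ IndB p r) ∧
    -- ψ is 𝔽_p-linear
    (∀ P Q, psi p (P + Q) = psi p P + psi p Q) ∧
    (∀ (c : ZMod p) P, psi p (c • P) = c • psi p P) ∧
    -- ψ is GL₂(𝔽_p)-equivariant (for the right-translation action on functions)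
    (∀ (h : GL (Fin 2) (ZMod p)) (P : MvPolynomial (Fin 2) (ZMod p)),
      psi p (polyAct p ((h : Matrix (Fin 2) (Fin 2) (ZMod p))) P) =
        fun g => psi p P (g * h)) ∧
    -- ψ restricted to V_r is surjective onto the induced representation
    (∀ f ∈ IndB p r, ∃ P ∈ Vpoly p r, psi p P = f) ∧
    -- the kernel of ψ on V_r is exactly V_r*
    (∀ P ∈ Vpoly p r, (psi p P = 0 ↔ P ∈ VpolyStar p r)) := by
  refine ⟨psi_mem p r, ?_, ?_, psi_equiv p, psi_surj p r hr, ?_⟩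
  · intro P Q
    funext g
    simp [psi]
  · intro c P
    funext g
    simp [psi, smul_eval]
  · intro P hP
    constructor
    · intro h
      exact ⟨hP, ker_mem p r hr P hP h⟩
    · rintro ⟨_, h⟩
      have h' : P ∈ Ideal.span {thetaPoly p} := h
      obtain ⟨u, rfl⟩ := Ideal.mem_span_singleton.1 h'
      funext g
      simp [psi, eval_theta]
end

section
/- Let p be a prime. The GL₂(𝔽_p)-representation V_{2p−2}/V*_{2p−2} is the internal direct sum of two subrepresentations: the subrepresentation generated by the class of X^{2p−2}, which is isomorphic to V_{p−1} via the map determined by X^{p−1} ↦ class of X^{2p−2}, and the one-dimensional subspace spanned by the class of X^{2p−2} − X^{p−1}Y^{p−1} + Y^{2p−2}, on which GL₂(𝔽_p) acts trivially (i.e., which is isomorphic to V_0). -/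
/-!
Common setup: the symmetric power representations `V_r` of `GL₂(𝔽_p)` realized as
homogeneous polynomials of degree `r` in `𝔽_p[X,Y]` with the action
`([[a,b],[c,d]]·P)(X,Y) = P(aX+cY, bX+dY)`, the subrepresentation `V_r*` of polynomials
divisible by `X^p Y − X Y^p`, and the quotient representation `V_{2p−2}/V*_{2p−2}`.
-/

set_option synthInstance.maxHeartbeats 1000000
set_option maxHeartbeats 1000000

open MvPolynomial

variable (p : ℕ) [Fact p.Prime]

lemma polyAct_mem (M : Matrix (Fin 2) (Fin 2) (ZMod p)) {r : ℕ}
    {P : MvPolynomial (Fin 2) (ZMod p)} (hP : P ∈ Vpoly p r) :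
    polyAct p M P ∈ Vpoly p r := by
  rw [Vpoly, mem_homogeneousSubmodule] at hP ⊢
  have h := hP.aeval (g := fun i => ∑ j, C (M j i) * X j) (n := 1) ?_
  · rw [one_mul] at h; exact h
  · intro i
    apply MvPolynomial.IsHomogeneous.sum
    intro j _
    simpa using (isHomogeneous_C (Fin 2) (M j i)).mul (isHomogeneous_X (ZMod p) j)

lemma frob (a c : ZMod p) : (C a * X 0 + C c * X 1 : MvPolynomial (Fin 2) (ZMod p)) ^ p
    = C a * X 0 ^ p + C c * X 1 ^ p := by
  have : (C a * X 0 + C c * X 1 : MvPolynomial (Fin 2) (ZMod p)) ^ p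
      = (C a * X 0) ^ p + (C c * X 1) ^ p := add_pow_char _ _ _
  rw [this, mul_pow, mul_pow, ← C_pow, ← C_pow, ZMod.pow_card, ZMod.pow_card]

lemma polyAct_det (M : Matrix (Fin 2) (Fin 2) (ZMod p)) :
    polyAct p M ((X 0 : MvPolynomial (Fin 2) (ZMod p)) ^ p * X 1 - X 0 * X 1 ^ p)
      = C (M 0 0 * M 1 1 - M 1 0 * M 0 1) *
        ((X 0 : MvPolynomial (Fin 2) (ZMod p)) ^ p * X 1 - X 0 * X 1 ^ p) := by
  have h0 : polyAct p M (X 0) = C (M 0 0) * X 0 + C (M 1 0) * X 1 := by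
    simp [polyAct, Fin.sum_univ_two]
  have h1 : polyAct p M (X 1) = C (M 0 1) * X 0 + C (M 1 1) * X 1 := by
    simp [polyAct, Fin.sum_univ_two]
  have hact : ∀ Q R : MvPolynomial (Fin 2) (ZMod p),
      polyAct p M (Q * R) = polyAct p M Q * polyAct p M R := fun Q R => by
    simp [polyAct]
  have hsub : ∀ Q R : MvPolynomial (Fin 2) (ZMod p),
      polyAct p M (Q - R) = polyAct p M Q - polyAct p M R := fun Q R => by
    simp [polyAct]
  have hpow : ∀ (Q : MvPolynomial (Fin 2) (ZMod p)) (n : ℕ),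
      polyAct p M (Q ^ n) = polyAct p M Q ^ n := fun Q n => by
    simp [polyAct]
  rw [hsub, hact, hact, hpow, hpow, h0, h1, frob, frob]
  simp only [map_sub, map_mul]
  ring

lemma polyAct_star_mem (M : Matrix (Fin 2) (Fin 2) (ZMod p)) {r : ℕ}
    {P : MvPolynomial (Fin 2) (ZMod p)} (hP : P ∈ VpolyStar p r) :
    polyAct p M P ∈ VpolyStar p r := by
  rw [VpolyStar, Submodule.mem_inf] at hP ⊢
  obtain ⟨h1, h2⟩ := hP
  refine ⟨polyAct_mem p M h1, ?_⟩
  rw [Submodule.restrictScalars_mem, Ideal.mem_span_singleton] at h2 ⊢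
  obtain ⟨Q, hQ⟩ := h2
  refine ⟨C (M 0 0 * M 1 1 - M 1 0 * M 0 1) * polyAct p M Q, ?_⟩
  have hact : ∀ Q R : MvPolynomial (Fin 2) (ZMod p),
      polyAct p M (Q * R) = polyAct p M Q * polyAct p M R := fun Q R => by
    simp [polyAct]
  rw [hQ, hact, polyAct_det]
  ring

/-- The action of M on `V_r` (the restriction of `polyAct`). -/
noncomputable def actV (r : ℕ) (M : Matrix (Fin 2) (Fin 2) (ZMod p)) :
    Vpoly p r →ₗ[ZMod p] Vpoly p r :=
  (polyAct p M).restrict (fun _ hx => polyAct_mem p M hx)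

/-- `V*_{2p−2}` as a submodule of `V_{2p−2}`. -/
noncomputable def VStarIn : Submodule (ZMod p) (Vpoly p (2 * p - 2)) :=
  (VpolyStar p (2 * p - 2)).comap (Vpoly p (2 * p - 2)).subtype

/-- The quotient representation `V_{2p−2}/V*_{2p−2}`. -/
abbrev Qspace := Vpoly p (2 * p - 2) ⧸ VStarIn p

/-- The action of M on the quotient `V_{2p−2}/V*_{2p−2}`. -/
noncomputable def qAct (M : Matrix (Fin 2) (Fin 2) (ZMod p)) :
    Qspace p →ₗ[ZMod p] Qspace p :=
  Submodule.mapQ (VStarIn p) (VStarIn p) (actV p (2 * p - 2) M)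
    (fun x hx => by
      simp only [VStarIn, Submodule.mem_comap] at hx ⊢
      exact polyAct_star_mem p M hx)

lemma memX0 (n : ℕ) : (X 0 : MvPolynomial (Fin 2) (ZMod p)) ^ n ∈ Vpoly p n := by
  rw [Vpoly, mem_homogeneousSubmodule]
  simpa using (isHomogeneous_X (ZMod p) (0 : Fin 2)).pow n

lemma memc : ((X 0 : MvPolynomial (Fin 2) (ZMod p)) ^ (2 * p - 2)
    - X 0 ^ (p - 1) * X 1 ^ (p - 1) + X 1 ^ (2 * p - 2)) ∈ Vpoly p (2 * p - 2) := by
  have h2 : (2 : ℕ) ≤ p := (Fact.out : p.Prime).two_le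
  rw [Vpoly, mem_homogeneousSubmodule]
  have hX0 : ((X 0 : MvPolynomial (Fin 2) (ZMod p)) ^ (2 * p - 2)).IsHomogeneous (2 * p - 2) := by
    simpa using (isHomogeneous_X (ZMod p) (0 : Fin 2)).pow (2 * p - 2)
  have hX1 : ((X 1 : MvPolynomial (Fin 2) (ZMod p)) ^ (2 * p - 2)).IsHomogeneous (2 * p - 2) := by
    simpa using (isHomogeneous_X (ZMod p) (1 : Fin 2)).pow (2 * p - 2)
  have hmid : ((X 0 : MvPolynomial (Fin 2) (ZMod p)) ^ (p - 1)
      * X 1 ^ (p - 1)).IsHomogeneous (2 * p - 2) := by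
    have h := (((isHomogeneous_X (ZMod p) (0 : Fin 2)).pow (p - 1)).mul
      ((isHomogeneous_X (ZMod p) (1 : Fin 2)).pow (p - 1)))
    have he : 1 * (p - 1) + 1 * (p - 1) = 2 * p - 2 := by omega
    rwa [he] at h
  exact (hX0.sub hmid).add hX1

/-- The class of `X^{2p−2}` in `V_{2p−2}/V*_{2p−2}`. -/
noncomputable def xElt : Qspace p :=
  Submodule.Quotient.mk ⟨(X 0 : MvPolynomial (Fin 2) (ZMod p)) ^ (2 * p - 2), memX0 p (2 * p - 2)⟩

/-- The class of `X^{2p−2} − X^{p−1}Y^{p−1} + Y^{2p−2}` in `V_{2p−2}/V*_{2p−2}`. -/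
noncomputable def cElt : Qspace p :=
  Submodule.Quotient.mk ⟨(X 0 : MvPolynomial (Fin 2) (ZMod p)) ^ (2 * p - 2)
    - X 0 ^ (p - 1) * X 1 ^ (p - 1) + X 1 ^ (2 * p - 2), memc p⟩

namespace Aux

variable (p : ℕ) [Fact p.Prime]

lemma pow_ne {x : ZMod p} (hx : x ≠ 0) : x ^ (2 * p - 2) = 1 := by
  have : 2 * p - 2 = (p - 1) * 2 := by omega
  rw [this, pow_mul, ZMod.pow_card_sub_one_eq_one hx, one_pow]

lemma two_le : 2 ≤ p := (Fact.out : p.Prime).two_le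

lemma zero_pow' : (0 : ZMod p) ^ (2 * p - 2) = 0 := by
  have := two_le p
  exact zero_pow (by omega)

lemma zero_pow'' : (0 : ZMod p) ^ (p - 1) = 0 := by
  have := two_le p
  exact zero_pow (by omega)

lemma pow_eq (x : ZMod p) : x ^ (2 * p - 2) = x ^ (p - 1) := by
  by_cases hx : x = 0
  · subst hx; rw [zero_pow', zero_pow'']
  · rw [pow_ne p hx, ZMod.pow_card_sub_one_eq_one hx]

/-- The polynomial `θ`. -/
noncomputable abbrev th : MvPolynomial (Fin 2) (ZMod p) := X 0 ^ p * X 1 - X 0 * X 1 ^ p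

lemma reduce {F : MvPolynomial (Fin 2) (ZMod p)} (hF : F ∈ Vpoly p (2 * p - 2)) :
    ∃ (G : MvPolynomial (Fin 2) (ZMod p)) (a : ZMod p) (b : Fin p → ZMod p),
      F = th p * G + C a * X 0 ^ (2 * p - 2) +
        ∑ i : Fin p, C (b i) * (X 0 ^ (i : ℕ) * X 1 ^ (2 * p - 2 - i)) := by
  have hp := two_le p
  let S : Submodule (ZMod p) (MvPolynomial (Fin 2) (ZMod p)) :=
    Submodule.restrictScalars (ZMod p) (Ideal.span {th p}) ⊔
    Submodule.span (ZMod p) {X 0 ^ (2 * p - 2)} ⊔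
    Submodule.span (ZMod p) (Set.range fun i : Fin p => X 0 ^ (i : ℕ) * X 1 ^ (2 * p - 2 - i))
  have hb : ∀ i < p, (X 0 ^ i * X 1 ^ (2 * p - 2 - i) : MvPolynomial (Fin 2) (ZMod p)) ∈ S := by
    intro i hi
    exact Submodule.mem_sup_right (Submodule.subset_span ⟨⟨i, hi⟩, rfl⟩)
  have hS : F ∈ S := by
    rw [F.as_sum]
    refine Submodule.sum_mem _ fun d hd => ?_
    have hdeg : d 0 + d 1 = 2 * p - 2 := by
      have := (mem_homogeneousSubmodule _ _).1 hF (mem_support_iff.1 hd)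
      simpa [Finsupp.weight_apply, Finsupp.sum_fintype, Fin.sum_univ_two] using this
    rw [monomial_eq, Finsupp.prod_fintype _ _ (by simp),
      Fin.prod_univ_two, ← smul_eq_C_mul]
    refine S.smul_mem _ ?_
    by_cases h0 : d 0 < p
    · have := hb _ h0
      rwa [show 2 * p - 2 - d 0 = d 1 by omega] at this
    by_cases h1 : d 1 = 0
    · rw [h1, show d 0 = 2 * p - 2 by omega, pow_zero, mul_one]
      exact Submodule.mem_sup_left (Submodule.mem_sup_right (Submodule.mem_span_singleton_self _))
    · obtain ⟨m, hm⟩ : ∃ m, d 0 = p + m := ⟨d 0 - p, by omega⟩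
      obtain ⟨n, hn⟩ : ∃ n, d 1 = n + 1 := ⟨d 1 - 1, by omega⟩
      have : (X 0 ^ d 0 * X 1 ^ d 1 : MvPolynomial (Fin 2) (ZMod p)) =
          th p * (X 0 ^ m * X 1 ^ n) + X 0 ^ (m + 1) * X 1 ^ (2 * p - 2 - (m + 1)) := by
        rw [hm, hn, show 2 * p - 2 - (m + 1) = p + n by omega]
        simp only [th]
        ring
      rw [this]
      refine S.add_mem ?_ (hb _ (by omega))
      refine Submodule.mem_sup_left (Submodule.mem_sup_left ?_)
      rw [Submodule.restrictScalars_mem, Ideal.mem_span_singleton]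
      exact Dvd.intro _ rfl
  obtain ⟨u, hu, v, hv, rfl⟩ := Submodule.mem_sup.1 hS
  obtain ⟨s, hs, t, ht, rfl⟩ := Submodule.mem_sup.1 hu
  rw [Submodule.restrictScalars_mem, Ideal.mem_span_singleton] at hs
  obtain ⟨G, rfl⟩ := hs
  obtain ⟨a, rfl⟩ := Submodule.mem_span_singleton.1 ht
  obtain ⟨b, rfl⟩ := (Submodule.mem_span_range_iff_exists_fun _).1 hv
  exact ⟨G, a, b, by simp only [smul_eq_C_mul]⟩

lemma dvd_of_eval {F : MvPolynomial (Fin 2) (ZMod p)} (hF : F ∈ Vpoly p (2 * p - 2))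
    (h : ∀ w : Fin 2 → ZMod p, eval w F = 0) : F ∈ Ideal.span {th p} := by
  have hp := two_le p
  obtain ⟨G, a, b, rfl⟩ := reduce p hF
  have ha : a = 0 := by
    have := h ![1, 0]
    have hz : ∀ i : Fin p, (0 : ZMod p) ^ (2 * p - 2 - (i : ℕ)) = 0 := fun i =>
      zero_pow (by omega)
    simpa [th, hz, (Fact.out : p.Prime).ne_zero] using this
  subst ha
  have hb : ∀ i, b i = 0 := by
    let f : Polynomial (ZMod p) := ∑ i : Fin p, Polynomial.C (b i) * Polynomial.X ^ (i : ℕ)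
    have hdeg : f.degree < p := by
      rw [Polynomial.degree_lt_iff_coeff_zero]
      intro m hm
      simp only [f, Polynomial.finsetSum_coeff, Polynomial.coeff_C_mul_X_pow]
      refine Finset.sum_eq_zero fun i _ => if_neg (by omega)
    have hf : f = 0 := by
      refine Polynomial.eq_zero_of_degree_lt_of_eval_finset_eq_zero (Finset.univ : Finset (ZMod p))
        (by simpa [ZMod.card] using hdeg) ?_
      intro x _
      have := h ![x, 1]
      simpa [th, f, Polynomial.eval_finsetSum, ZMod.pow_card] using this
    intro i
    have := congrArg (fun q => Polynomial.coeff q i) hf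
    simpa [f, Polynomial.finsetSum_coeff, Polynomial.coeff_C_mul_X_pow, Fin.val_inj] using this
  simp only [hb, map_zero, zero_mul, Finset.sum_const_zero, add_zero]
  exact Ideal.mem_span_singleton.2 (Dvd.intro _ rfl)

/-- Evaluation on `V_r`. -/
noncomputable def ev (r : ℕ) : Vpoly p r →ₗ[ZMod p] ((Fin 2 → ZMod p) → ZMod p) where
  toFun F w := eval w F.1
  map_add' F G := by ext w; simp
  map_smul' a F := by ext w; simp [smul_eval]

/-- Evaluation on the quotient. -/
noncomputable def evQ : Qspace p →ₗ[ZMod p] ((Fin 2 → ZMod p) → ZMod p) :=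
  (VStarIn p).liftQ (ev p (2 * p - 2)) (by
    intro F hF
    have hF' : F.1 ∈ VpolyStar p (2 * p - 2) := hF
    have h2 := (Submodule.mem_inf.1 hF').2
    rw [Submodule.restrictScalars_mem, Ideal.mem_span_singleton] at h2
    obtain ⟨G, hG⟩ := h2
    rw [LinearMap.mem_ker]
    ext w
    simp [ev, hG, ZMod.pow_card])

lemma evQ_mk (F : Vpoly p (2 * p - 2)) (w) :
    evQ p (Submodule.Quotient.mk F) w = eval w F.1 := rfl

lemma evQ_inj : Function.Injective (evQ p) := by
  rw [← LinearMap.ker_eq_bot, LinearMap.ker_eq_bot']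
  intro q hq
  induction q using Submodule.Quotient.induction_on with
  | H F =>
    rw [Submodule.Quotient.mk_eq_zero]
    refine Submodule.mem_inf.2 ⟨F.2, ?_⟩
    exact dvd_of_eval p F.2 fun w => congrFun hq w

/-- The right action on points. -/
def act (M : Matrix (Fin 2) (Fin 2) (ZMod p)) (w : Fin 2 → ZMod p) : Fin 2 → ZMod p :=
  fun i => ∑ j, M j i * w j

lemma eval_polyAct (M : Matrix (Fin 2) (Fin 2) (ZMod p)) (F w) :
    eval w (polyAct p M F) = eval (act p M w) F := by
  have hmul : ∀ Q R : MvPolynomial (Fin 2) (ZMod p),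
      polyAct p M (Q * R) = polyAct p M Q * polyAct p M R := fun Q R => by
    simp [polyAct]
  induction F using MvPolynomial.induction_on with
  | C a => simp [polyAct]
  | add f g hf hg => simp only [map_add, hf, hg]
  | mul_X f i hf =>
    rw [hmul, map_mul, hf, map_mul]
    simp [polyAct, act]

lemma evQ_qAct (M : Matrix (Fin 2) (Fin 2) (ZMod p)) (q w) :
    evQ p (qAct p M q) w = evQ p q (act p M w) := by
  induction q using Submodule.Quotient.induction_on with
  | H F => exact eval_polyAct p M F.1 w

lemma act_vecMul (M : Matrix (Fin 2) (Fin 2) (ZMod p)) (w) :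
    act p M w = Matrix.vecMul w M := by
  ext i; simp [act, Matrix.vecMul, dotProduct, mul_comm]

lemma act_ne (g : GL (Fin 2) (ZMod p)) (w) : act p (g : Matrix (Fin 2) (Fin 2) (ZMod p)) w = 0 ↔ w = 0 := by
  rw [act_vecMul]
  constructor
  · intro h
    have := congrArg (fun v => Matrix.vecMul v ((g⁻¹ : GL (Fin 2) (ZMod p)) : Matrix (Fin 2) (Fin 2) (ZMod p))) h
    simp only [Matrix.vecMul_vecMul, ← Units.val_mul, mul_inv_cancel, Units.val_one,
      Matrix.vecMul_one, Matrix.zero_vecMul] at this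
    exact this
  · rintro rfl; simp

/-- The linear form. -/
noncomputable def ell (v : Fin 2 → ZMod p) : MvPolynomial (Fin 2) (ZMod p) :=
  C (v 1) * X 0 - C (v 0) * X 1

lemma ell_mem (v : Fin 2 → ZMod p) (n : ℕ) : ell p v ^ n ∈ Vpoly p n := by
  rw [Vpoly, mem_homogeneousSubmodule]
  have h : (ell p v).IsHomogeneous 1 := by
    have h1 := (isHomogeneous_C (Fin 2) (v 1)).mul (isHomogeneous_X (ZMod p) (0 : Fin 2))
    have h2 := (isHomogeneous_C (Fin 2) (v 0)).mul (isHomogeneous_X (ZMod p) (1 : Fin 2))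
    exact h1.sub h2
  simpa using h.pow n

/-- Class of the power of a linear form. -/
noncomputable def lin (v : Fin 2 → ZMod p) : Qspace p :=
  Submodule.Quotient.mk ⟨ell p v ^ (2 * p - 2), ell_mem p v _⟩

lemma evQ_lin (v w) : evQ p (lin p v) w = (v 1 * w 0 - v 0 * w 1) ^ (2 * p - 2) := by
  simp [lin, evQ_mk, ell]

lemma evQ_x (w) : evQ p (xElt p) w = w 0 ^ (2 * p - 2) := by
  simp [xElt, evQ_mk]

lemma evQ_c (w) : evQ p (cElt p) w = if w = 0 then 0 else 1 := by
  have : evQ p (cElt p) w = w 0 ^ (2 * p - 2) - w 0 ^ (p - 1) * w 1 ^ (p - 1) + w 1 ^ (2 * p - 2) := by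
    simp [cElt, evQ_mk]
  rw [this, pow_eq, pow_eq]
  by_cases h0 : w 0 = 0 <;> by_cases h1 : w 1 = 0
  · rw [if_pos (by ext i; fin_cases i <;> simp [h0, h1]), h0, h1, zero_pow'']; simp
  · rw [if_neg (by rintro rfl; simp at h1), h0, zero_pow'', ZMod.pow_card_sub_one_eq_one h1]; simp
  · rw [if_neg (by rintro rfl; simp at h0), h1, zero_pow'', ZMod.pow_card_sub_one_eq_one h0]; simp
  · rw [if_neg (by rintro rfl; simp at h0), ZMod.pow_card_sub_one_eq_one h0,
      ZMod.pow_card_sub_one_eq_one h1]; simp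

lemma key (f : (Fin 2 → ZMod p) → ZMod p) (h0 : f 0 = 0)
    (hf : ∀ (t : ZMod p) w, t ≠ 0 → f (t • w) = f w) (w) :
    ∑ v, f v * evQ p (lin p v) w = f w + (∑ v, f v) * evQ p (cElt p) w := by
  by_cases hw : w = 0
  · subst hw
    simp [evQ_lin, evQ_c, h0, zero_pow']
  rw [evQ_c, if_neg hw, mul_one]
  suffices h : ∑ v, f v * (1 - evQ p (lin p v) w) = - f w by
    simp only [mul_sub, mul_one, Finset.sum_sub_distrib] at h
    linear_combination -h
  have h1 : ∀ v, f v * (1 - evQ p (lin p v) w) = if v 1 * w 0 - v 0 * w 1 = 0 then f v else 0 := by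
    intro v
    rw [evQ_lin]
    split_ifs with h
    · rw [h, zero_pow']; ring
    · rw [pow_ne p h]; ring
  simp only [h1]
  rw [← Finset.sum_filter]
  have himg : (Finset.univ.filter fun v : Fin 2 → ZMod p => v 1 * w 0 - v 0 * w 1 = 0) =
      Finset.univ.image fun t : ZMod p => t • w := by
    ext v
    simp only [Finset.mem_filter, Finset.mem_univ, true_and, Finset.mem_image]
    constructor
    · intro h
      by_cases hw0 : w 0 = 0
      · have hw1 : w 1 ≠ 0 := fun hw1 => hw (by ext i; fin_cases i <;> simp [hw0, hw1])
        have hv0 : v 0 = 0 := by simpa [hw0, hw1] using h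
        refine ⟨v 1 / w 1, ?_⟩
        ext i; fin_cases i
        · simp [hw0, hv0]
        · simp [hw1]
      · refine ⟨v 0 / w 0, ?_⟩
        ext i; fin_cases i
        · simp [hw0]
        · simp only [Pi.smul_apply, smul_eq_mul, Fin.mk_one]
          field_simp
          linear_combination -h
    · rintro ⟨t, rfl⟩
      simp only [Pi.smul_apply, smul_eq_mul]; ring
  rw [himg, Finset.sum_image (fun a _ b _ h => smul_left_injective _ hw h)]
  rw [← Finset.add_sum_erase _ _ (Finset.mem_univ (0 : ZMod p))]
  simp only [zero_smul, h0, zero_add]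
  rw [
    Finset.sum_congr rfl fun t ht => hf t w (Finset.ne_of_mem_erase ht)]
  have hp := two_le p
  simp [Finset.card_erase_of_mem, ZMod.card, Nat.cast_sub (show 1 ≤ p by omega)]

lemma ev_smul {r : ℕ} (F : Vpoly p r) (t : ZMod p) (w) : ev p r F (t • w) = t ^ r * ev p r F w := by
  have h : F.1.IsHomogeneous r := (mem_homogeneousSubmodule _ _).1 F.2
  simp only [ev, LinearMap.coe_mk, AddHom.coe_mk]
  rw [eval_eq, eval_eq, Finset.mul_sum]
  refine Finset.sum_congr rfl fun d hd => ?_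
  have h2 : d.sum (fun _ n => n) = r := by
    simpa [Finsupp.weight_apply, Finsupp.sum] using h (mem_support_iff.1 hd)
  have h3 : t ^ r = ∏ i ∈ d.support, t ^ d i := by
    rw [Finset.prod_pow_eq_pow_sum, ← h2, Finsupp.sum]
  rw [h3]
  simp only [Pi.smul_apply, smul_eq_mul, mul_pow, Finset.prod_mul_distrib]
  ring

/-- The embedding. -/
noncomputable def iota : Vpoly p (p - 1) →ₗ[ZMod p] Qspace p where
  toFun P := ∑ v, ev p (p - 1) P v • lin p v
  map_add' P Q := by simp [add_smul, Finset.sum_add_distrib]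
  map_smul' a P := by simp [Finset.smul_sum, mul_smul]

lemma sum_ev (P : Vpoly p (p - 1)) : ∑ v, ev p (p - 1) P v = 0 := by
  have hp := two_le p
  have h : P.1.IsHomogeneous (p - 1) := (mem_homogeneousSubmodule _ _).1 P.2
  refine MvPolynomial.sum_eval_eq_zero P.1 ?_
  have := h.totalDegree_le
  simp only [ZMod.card, Fintype.card_fin]
  omega

lemma ev_iota (P) (w) : evQ p (iota p P) w = ev p (p - 1) P w := by
  have hp := two_le p
  have := key p (ev p (p - 1) P)
    (by have := ev_smul p P 0 0; rwa [smul_zero, zero_pow'', zero_mul] at this)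
    (fun t w ht => by rw [ev_smul, ZMod.pow_card_sub_one_eq_one ht, one_mul]) w
  rw [sum_ev, zero_mul, add_zero] at this
  rw [← this]
  simp [iota]

lemma lin_eq (v) : lin p v = iota p ⟨ell p v ^ (p - 1), ell_mem p v _⟩ := by
  apply evQ_inj
  ext w
  rw [ev_iota, evQ_lin, pow_eq]
  simp [ev, ell]

lemma q_eq (q : Qspace p) : q = ∑ v, evQ p q v • lin p v - (∑ v, evQ p q v) • cElt p := by
  apply evQ_inj
  ext w
  have hs : ∀ (t : ZMod p) w, evQ p q (t • w) = t ^ (2 * p - 2) * evQ p q w := by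
    intro t w
    induction q using Submodule.Quotient.induction_on with
    | H F => exact ev_smul p F t w
  have := key p (evQ p q)
    (by have := hs 0 0; rwa [smul_zero, zero_pow', zero_mul] at this)
    (fun t w ht => by rw [hs, pow_ne p ht, one_mul]) w
  simp only [map_sub, map_sum, map_smul, Pi.sub_apply, Finset.sum_apply, Pi.smul_apply, smul_eq_mul]
  rw [this]; ring

lemma iota_inj : Function.Injective (iota p) := by
  rw [← LinearMap.ker_eq_bot, LinearMap.ker_eq_bot']
  intro P hP
  have h : ∀ w, eval w P.1 = 0 := fun w => by
    have := ev_iota p P w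
    rw [hP, map_zero] at this
    exact this.symm
  have hh : P.1.IsHomogeneous (p - 1) := (mem_homogeneousSubmodule _ _).1 P.2
  apply Subtype.ext
  refine MvPolynomial.eq_zero_of_eval_eq_zero (Fin 2) (ZMod p) P.1 h ?_
  rw [mem_restrictDegree]
  intro s hs i
  rw [ZMod.card]
  have h1 := hh (mem_support_iff.1 hs)
  have h2 : s 0 + s 1 = p - 1 := by
    simpa [Finsupp.weight_apply, Finsupp.sum_fintype, Fin.sum_univ_two] using h1
  fin_cases i
  · show s 0 ≤ _
    omega
  · show s 1 ≤ _
    omega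

lemma lin_gen (v : Fin 2 → ZMod p) (hv : v ≠ 0) : ∃ g : GL (Fin 2) (ZMod p),
    qAct p (g : Matrix (Fin 2) (Fin 2) (ZMod p)) (xElt p) = lin p v := by
  obtain ⟨s, t, hst⟩ : ∃ s t, v 1 * t - s * (- v 0) ≠ 0 := by
    by_cases h1 : v 1 = 0
    · refine ⟨1, 0, fun h => hv ?_⟩
      have : v 0 = 0 := by simpa using h
      ext i; fin_cases i <;> simp [h1, this]
    · exact ⟨0, 1, by simpa using h1⟩
  refine ⟨Matrix.GeneralLinearGroup.mkOfDetNeZero !![v 1, s; - v 0, t] ?_, ?_⟩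
  · rwa [Matrix.det_fin_two_of]
  · apply evQ_inj
    ext w
    rw [evQ_qAct, evQ_x, evQ_lin]
    simp [act, Fin.sum_univ_two, Matrix.GeneralLinearGroup.mkOfDetNeZero, sub_eq_add_neg]

end Aux

/-- `V_{2p−2}/V*_{2p−2}` is the internal direct sum of the
subrepresentation generated by the class of `X^{2p−2}` — a copy of `V_{p−1}` via
`X^{p−1} ↦ X^{2p−2}` — and the one-dimensional trivial subrepresentation spanned by the
class of `X^{2p−2} − X^{p−1}Y^{p−1} + Y^{2p−2}`. -/
theorem stmt1 (p : ℕ) [Fact p.Prime] :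
    ∃ ι : Vpoly p (p - 1) →ₗ[ZMod p] Qspace p,
      -- ι is an embedding of V_{p−1}
      Function.Injective ι ∧
      -- equivariant for every g ∈ GL₂(𝔽_p)
      (∀ (g : GL (Fin 2) (ZMod p)) (P : Vpoly p (p - 1)),
        ι (actV p (p - 1) (g : Matrix (Fin 2) (Fin 2) (ZMod p)) P) =
          qAct p (g : Matrix (Fin 2) (Fin 2) (ZMod p)) (ι P)) ∧
      -- determined by X^{p−1} ↦ class of X^{2p−2}
      ι ⟨(X 0 : MvPolynomial (Fin 2) (ZMod p)) ^ (p - 1), memX0 p (p - 1)⟩ = xElt p ∧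
      -- its image is the subrepresentation generated by the class of X^{2p−2}
      (∀ W : Submodule (ZMod p) (Qspace p),
        (∀ (g : GL (Fin 2) (ZMod p)), ∀ x ∈ W, qAct p (g : Matrix (Fin 2) (Fin 2) (ZMod p)) x ∈ W) →
        xElt p ∈ W → LinearMap.range ι ≤ W) ∧
      -- the complement is the line spanned by the class of X^{2p−2} − X^{p−1}Y^{p−1} + Y^{2p−2},
      cElt p ≠ 0 ∧
      -- on which GL₂(𝔽_p) acts trivially,
      (∀ g : GL (Fin 2) (ZMod p), qAct p (g : Matrix (Fin 2) (Fin 2) (ZMod p)) (cElt p) = cElt p) ∧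
      -- and the two pieces form an internal direct sum decomposition
      LinearMap.range ι ⊓ Submodule.span (ZMod p) {cElt p} = ⊥ ∧
      LinearMap.range ι ⊔ Submodule.span (ZMod p) {cElt p} = ⊤ := by
  have hp := Aux.two_le p
  have hsum : ∑ w, Aux.evQ p (cElt p) w = -1 := by
    simp only [Aux.evQ_c]
    rw [← Finset.add_sum_erase _ _ (Finset.mem_univ (0 : Fin 2 → ZMod p)), if_pos rfl, zero_add,
      Finset.sum_congr rfl fun t ht => if_neg (Finset.ne_of_mem_erase ht)]
    have h1 : 1 ≤ p ^ 2 := Nat.one_le_pow _ _ (by omega)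
    simp [Finset.card_erase_of_mem, ZMod.card, Nat.cast_sub h1]
  refine ⟨Aux.iota p, Aux.iota_inj p, ?_, ?_, ?_, ?_, ?_, ?_, ?_⟩
  · intro g P
    apply Aux.evQ_inj
    ext w
    rw [Aux.ev_iota, Aux.evQ_qAct, Aux.ev_iota]
    exact Aux.eval_polyAct p _ P.1 w
  · apply Aux.evQ_inj
    ext w
    rw [Aux.ev_iota, Aux.evQ_x, Aux.pow_eq]
    simp [Aux.ev]
  · rintro W hW hx _ ⟨P, rfl⟩
    refine W.sum_mem fun v _ => W.smul_mem _ ?_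
    by_cases hv : v = 0
    · have : Aux.lin p v = 0 := by
        apply Aux.evQ_inj
        ext w
        rw [Aux.evQ_lin, hv]
        simp [Aux.zero_pow']
      rw [this]; exact W.zero_mem
    · obtain ⟨g, hg⟩ := Aux.lin_gen p v hv
      rw [← hg]; exact hW g _ hx
  · intro h
    rw [h] at hsum
    simp at hsum
  · intro g
    apply Aux.evQ_inj
    ext w
    rw [Aux.evQ_qAct, Aux.evQ_c, Aux.evQ_c]
    simp only [Aux.act_ne]
  · rw [eq_bot_iff]
    rintro _ ⟨⟨P, rfl⟩, h⟩
    obtain ⟨a, ha⟩ := Submodule.mem_span_singleton.1 h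
    have h1 := Aux.sum_ev p P
    simp only [← Aux.ev_iota, ← ha, map_smul, Pi.smul_apply] at h1
    rw [← Finset.smul_sum, hsum] at h1
    have h2 : a = 0 := by simpa using h1
    rw [← ha, h2, zero_smul]
    exact Submodule.zero_mem _
  · rw [eq_top_iff]
    intro q _
    rw [Aux.q_eq p q]
    refine Submodule.sub_mem _ (Submodule.sum_mem _ fun v _ => Submodule.smul_mem _ _ ?_)
      (Submodule.smul_mem _ _ ?_)
    · exact Submodule.mem_sup_left ⟨_, (Aux.lin_eq p v).symm⟩
    · exact Submodule.mem_sup_right (Submodule.mem_span_singleton_self _)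
end

section
/- Let p be a prime. The representation V_{p−1} (the (p−1)-st symmetric power of the standard two-dimensional representation of GL₂(𝔽_p) over 𝔽_p) is a projective module over the group algebra 𝔽_p[GL₂(𝔽_p)]. -/
/-!
Setup: the symmetric power representation `V_{p−1}` of `GL₂(𝔽_p)`, realized as the
homogeneous polynomials of degree `p−1` in `𝔽_p[X,Y]` with the action
`([[a,b],[c,d]]·P)(X,Y) = P(aX+cY, bX+dY)`, viewed as a module over the group algebra
`𝔽_p[GL₂(𝔽_p)]` via `Representation.asModule`.
-/

set_option synthInstance.maxHeartbeats 1000000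
set_option maxHeartbeats 1000000

open MvPolynomial

variable (p : ℕ) [Fact p.Prime]

lemma polyAct_one : polyAct p 1 = LinearMap.id := by
  apply LinearMap.ext; intro P
  have hs : (fun i : Fin 2 => ∑ j, C ((1 : Matrix (Fin 2) (Fin 2) (ZMod p)) j i) * X j)
      = X := by
    funext i
    rw [Fin.sum_univ_two]
    fin_cases i <;> simp [Matrix.one_apply]
  show (aeval fun i => ∑ j, C ((1 : Matrix (Fin 2) (Fin 2) (ZMod p)) j i) * X j) P = P
  rw [hs, aeval_X_left_apply]

lemma polyAct_mul (M N : Matrix (Fin 2) (Fin 2) (ZMod p)) :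
    polyAct p (M * N) = polyAct p M ∘ₗ polyAct p N := by
  have key : (aeval fun i => ∑ j, C ((M * N) j i) * X j :
        MvPolynomial (Fin 2) (ZMod p) →ₐ[ZMod p] MvPolynomial (Fin 2) (ZMod p))
      = (aeval fun i => ∑ j, C (M j i) * X j).comp (aeval fun i => ∑ j, C (N j i) * X j) := by
    apply MvPolynomial.algHom_ext
    intro i
    simp [Fin.sum_univ_two, Matrix.mul_apply, map_add, map_mul]
    ring
  apply LinearMap.ext; intro P
  show (aeval fun i => ∑ j, C ((M * N) j i) * X j) P = _
  rw [key]
  rfl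

/-- `V_{p−1}` as a representation of `GL₂(𝔽_p)` over `𝔽_p`. -/
noncomputable def rhoV : Representation (ZMod p) (GL (Fin 2) (ZMod p)) (Vpoly p (p - 1)) where
  toFun g := actV p (p - 1) (g : Matrix (Fin 2) (Fin 2) (ZMod p))
  map_one' := by
    apply LinearMap.ext; intro x
    apply Subtype.ext
    show polyAct p ((1 : GL (Fin 2) (ZMod p)) : Matrix (Fin 2) (Fin 2) (ZMod p)) (x : _) = (x : _)
    rw [Units.val_one, polyAct_one]
    rfl
  map_mul' g h := by
    apply LinearMap.ext; intro x
    apply Subtype.ext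
    show polyAct p ((g * h : GL (Fin 2) (ZMod p)) : Matrix (Fin 2) (Fin 2) (ZMod p)) (x : _) = _
    rw [Units.val_mul, polyAct_mul]
    rfl

theorem aux_projective {k G V : Type*} [Field k] [Group G] [Fintype G] [AddCommGroup V]
    [Module k V] (ρ : Representation k G V) (lam : V →ₗ[k] k) (w : V)
    (H : ∀ v, ∑ g : G, lam (ρ g⁻¹ v) • ρ g w = v) :
    Module.Projective (MonoidAlgebra k G) ρ.asModule := by
  let f0 : ρ.asModule →ₗ[k] MonoidAlgebra k G :=
    { toFun := fun v => ∑ g : G, MonoidAlgebra.single g (lam (ρ g⁻¹ (ρ.asModuleEquiv v)))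
      map_add' := by
        intro x y
        simp [Finset.sum_add_distrib, MonoidAlgebra.single_add]
      map_smul' := by
        intro c x
        simp [Finset.smul_sum] }
  let f : ρ.asModule →ₗ[MonoidAlgebra k G] MonoidAlgebra k G :=
    MonoidAlgebra.equivariantOfLinearOfComm f0 (by
      intro h v
      show ∑ g : G, MonoidAlgebra.single g (lam (ρ g⁻¹ (ρ.asModuleEquiv
        (MonoidAlgebra.single h (1 : k) • v)))) = MonoidAlgebra.single h (1 : k) •
          ∑ g : G, MonoidAlgebra.single g (lam (ρ g⁻¹ (ρ.asModuleEquiv v)))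
      rw [Finset.smul_sum]
      symm
      refine Fintype.sum_bijective (h * ·) (Group.mulLeft_bijective h) _ _ fun g ↦ ?_
      rw [Representation.asModuleEquiv_map_smul, Representation.asAlgebraHom_single, smul_eq_mul,
        MonoidAlgebra.single_mul_single, one_mul, one_smul, ← Module.End.mul_apply, ← map_mul]
      simp)
  refine Module.Projective.of_split f
    (LinearMap.toSpanSingleton (MonoidAlgebra k G) ρ.asModule (ρ.asModuleEquiv.symm w)) ?_
  ext v
  show (∑ g : G, MonoidAlgebra.single g (lam (ρ g⁻¹ (ρ.asModuleEquiv v)))) •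
    (ρ.asModuleEquiv.symm w) = v
  apply ρ.asModuleEquiv.injective
  rw [Representation.asModuleEquiv_map_smul, map_sum, LinearMap.sum_apply]
  simp only [Representation.asAlgebraHom_single, LinearMap.smul_apply,
    LinearEquiv.apply_symm_apply]
  exact H _

theorem aux_eval_polyAct (M : Matrix (Fin 2) (Fin 2) (ZMod p)) (z : Fin 2 → ZMod p)
    (P : MvPolynomial (Fin 2) (ZMod p)) :
    eval z (polyAct p M P) = eval (Matrix.vecMul z M) P := by
  show eval z (aeval (fun i => ∑ j, C (M j i) * X j) P) = _
  induction P using MvPolynomial.induction_on with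
  | C a => simp
  | add P Q hP hQ => simp only [map_add, hP, hQ]
  | mul_X P i hP =>
    simp only [map_mul, hP]
    simp [Matrix.vecMul, dotProduct, Fin.sum_univ_two, mul_comm]

theorem aux_pow {x : ZMod p} (hx : x ≠ 0) : x ^ (p - 1) = 1 := ZMod.pow_card_sub_one_eq_one hx

theorem aux_pos : p - 1 ≠ 0 := by
  have := (Fact.out : p.Prime).two_le
  omega

theorem aux_pow_ite (x : ZMod p) : x ^ (p - 1) = if x = 0 then 0 else 1 := by
  split_ifs with h
  · rw [h, zero_pow (aux_pos p)]
  · exact aux_pow p h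

theorem aux_sum_pow : ∑ x : ZMod p, x ^ (p - 1) = -1 := by
  have : ∀ x : ZMod p, x ^ (p - 1) = 1 - if x = 0 then 1 else 0 := by
    intro x
    rw [aux_pow_ite]
    split_ifs <;> simp
  rw [Finset.sum_congr rfl fun x _ => this x, Finset.sum_sub_distrib]
  simp

theorem aux_sum_c (b t : ZMod p) : ∑ c : ZMod p, (t - b * c) ^ (p - 1) = - b ^ (p - 1) := by
  by_cases hb : b = 0
  · subst hb
    simp [zero_pow (aux_pos p)]
  · rw [aux_pow p hb, ← aux_sum_pow p]
    refine Fintype.sum_bijective (fun c => t - b * c) ?_ _ _ fun _ => rfl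
    apply Function.Injective.bijective_of_finite
    intro x y h
    simpa [hb] using h

theorem aux_sum_vec (F : (Fin 2 → ZMod p) → ZMod p) :
    ∑ v, F v = ∑ a, ∑ b, F ![a, b] := by
  rw [← (finTwoArrowEquiv (ZMod p)).symm.sum_comp, Fintype.sum_prod_type]
  simp

theorem aux_sum_GL (F : Matrix (Fin 2) (Fin 2) (ZMod p) → ZMod p)
    (hF : ∀ M, M.det = 0 → F M = 0) :
    ∑ g : GL (Fin 2) (ZMod p), F g.val = ∑ u, ∑ c, ∑ d, F (Matrix.of ![u, ![c, d]]) := by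
  have h1 : ∑ g : GL (Fin 2) (ZMod p), F g.val = ∑ M, F M := by
    refine Finset.sum_of_injOn (fun g => g.val) (fun a _ b _ h => Units.ext h) (by simp) ?_ (by simp)
    intro M _ hM
    apply hF
    by_contra hdet
    apply hM
    exact ⟨Matrix.GeneralLinearGroup.mkOfDetNeZero M hdet, by simp, rfl⟩
  rw [h1]
  have h2 : ∑ M, F M = ∑ u, ∑ v, F (Matrix.of ![u, v]) := by
    have := ((finTwoArrowEquiv (Fin 2 → ZMod p)).symm.trans Matrix.of).sum_comp F
    rw [Fintype.sum_prod_type] at this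
    simpa using this.symm
  rw [h2]
  exact Finset.sum_congr rfl fun u _ => aux_sum_vec p fun v => F (Matrix.of ![u, v])

theorem aux_eval_smul {P : MvPolynomial (Fin 2) (ZMod p)} {n : ℕ} (hP : P.IsHomogeneous n)
    (a : ZMod p) (z : Fin 2 → ZMod p) : eval (a • z) P = a ^ n * eval z P := by
  rw [eval_eq', eval_eq', Finset.mul_sum]
  refine Finset.sum_congr rfl fun d hd => ?_
  have := hP (mem_support_iff.mp hd)
  rw [Finsupp.weight_apply, Finsupp.sum_fintype _ _ (by simp), Fin.sum_univ_two] at this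
  simp only [Pi.one_apply, smul_eq_mul, mul_one] at this
  simp [Fin.prod_univ_two, ← this]
  ring

theorem aux_core {P : MvPolynomial (Fin 2) (ZMod p)} (hP : P.IsHomogeneous (p - 1)) :
    ∑ g : GL (Fin 2) (ZMod p), eval (g.val 0) P * (g⁻¹.val 0 0) ^ (p - 1) = eval ![1, 0] P := by
  have h1 : ∀ g : GL (Fin 2) (ZMod p), eval (g.val 0) P * (g⁻¹.val 0 0) ^ (p - 1)
      = eval (g.val 0) P * (g.val 1 1 ^ (p - 1) * g.val.det ^ (p - 1)) := by
    intro g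
    have hd : g.val.det ≠ 0 := g.det.ne_zero
    rw [aux_pow p hd, Matrix.coe_units_inv, Matrix.inv_def, Matrix.adjugate_fin_two]
    simp [mul_pow, aux_pow p hd]
  rw [Finset.sum_congr rfl fun g _ => h1 g, aux_sum_GL p
    (fun M => eval (M 0) P * (M 1 1 ^ (p - 1) * M.det ^ (p - 1)))
    (fun M hM => by simp [hM, zero_pow (aux_pos p)])]
  have h2 : ∀ u : Fin 2 → ZMod p, ∑ c, ∑ d, eval u P * (d ^ (p - 1) * (u 0 * d - u 1 * c) ^ (p - 1))
      = eval u P * u 1 ^ (p - 1) := by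
    intro u
    rw [Finset.sum_comm]
    simp_rw [← Finset.mul_sum, aux_sum_c, ← Finset.sum_mul, aux_sum_pow]
    ring
  have h3 : ∑ u : Fin 2 → ZMod p, ∑ c, ∑ d, eval u P *
      (d ^ (p - 1) * (u 0 * d - u 1 * c) ^ (p - 1)) = eval ![1, 0] P := by
    simp_rw [h2]
    have h4 : ∀ u : Fin 2 → ZMod p, eval u P * u 1 ^ (p - 1) =
        eval u P - if u 1 = 0 then eval u P else 0 := by
      intro u
      rw [aux_pow_ite]
      split_ifs <;> simp
    simp_rw [h4]
    rw [Finset.sum_sub_distrib, MvPolynomial.sum_eval_eq_zero, aux_sum_vec]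
    · have h5 : ∀ a : ZMod p, eval ![a, 0] P = a ^ (p - 1) * eval ![1, 0] P := by
        intro a
        rw [← aux_eval_smul p hP]
        simp
      have h6 : ∀ a : ZMod p, (∑ b : ZMod p, if (![a, b] : Fin 2 → ZMod p) 1 = 0 then
          eval ![a, b] P else 0) = a ^ (p - 1) * eval ![1, 0] P := by
        intro a
        rw [← h5 a]
        simp
      rw [Finset.sum_congr rfl fun a _ => h6 a, ← Finset.sum_mul, aux_sum_pow]
      ring
    · have := hP.totalDegree_le
      have := aux_pos p
      simp
      omega
  rw [← h3]
  simp [Matrix.det_fin_two]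
  rfl

theorem aux_exists_GL (z : Fin 2 → ZMod p) (hz : z ≠ 0) :
    ∃ h : GL (Fin 2) (ZMod p), h.val 0 = z := by
  by_cases h0 : z 0 = 0
  · have h1 : z 1 ≠ 0 := by
      intro h1
      apply hz
      ext i
      fin_cases i <;> simp [h0, h1]
    exact ⟨Matrix.GeneralLinearGroup.mkOfDetNeZero (Matrix.of ![z, ![1, 0]]) (by
      simp [Matrix.det_fin_two, h1]), rfl⟩
  · exact ⟨Matrix.GeneralLinearGroup.mkOfDetNeZero (Matrix.of ![z, ![0, 1]]) (by
      simp [Matrix.det_fin_two, h0]), rfl⟩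

theorem aux_ext {P : MvPolynomial (Fin 2) (ZMod p)} (hP : P.IsHomogeneous (p - 1))
    (h : ∀ g : GL (Fin 2) (ZMod p), eval (g.val 0) P = 0) : P = 0 := by
  apply MvPolynomial.eq_zero_of_eval_eq_zero
  · intro z
    by_cases hz : z = 0
    · have := aux_eval_smul p hP 0 0
      rw [zero_pow (aux_pos p), zero_mul, smul_zero] at this
      rw [hz, this]
    · obtain ⟨g, rfl⟩ := aux_exists_GL p z hz
      exact h g
  · rw [mem_restrictDegree, ZMod.card]
    intro d hd i
    have := hP (mem_support_iff.mp hd)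
    rw [← this, Finsupp.weight_apply, Finsupp.sum_fintype _ _ (by simp), Fin.sum_univ_two]
    fin_cases i <;> simp

/-- Evaluation at `(1, 0)`. -/
noncomputable def auxLam : Vpoly p (p - 1) →ₗ[ZMod p] ZMod p :=
  (aeval (![1, 0] : Fin 2 → ZMod p)).toLinearMap ∘ₗ (Vpoly p (p - 1)).subtype

theorem auxLam_rho (g : GL (Fin 2) (ZMod p)) (v : Vpoly p (p - 1)) :
    auxLam p (rhoV p g v) = eval (g.val 0) (v : MvPolynomial (Fin 2) (ZMod p)) := by
  show aeval (![1, 0] : Fin 2 → ZMod p) (polyAct p g.val v) = _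
  rw [aeval_eq_eval, aux_eval_polyAct]
  congr 2
  ext i
  simp [Matrix.vecMul, dotProduct, Fin.sum_univ_two]

/-- `V_{p−1}` is a projective module over the group algebra
`𝔽_p[GL₂(𝔽_p)]`. -/
theorem stmt3 (p : ℕ) [Fact p.Prime] :
    Module.Projective (MonoidAlgebra (ZMod p) (GL (Fin 2) (ZMod p))) (rhoV p).asModule := by
  classical
  let w : Vpoly p (p - 1) := ⟨X 0 ^ (p - 1), by
    rw [Vpoly, mem_homogeneousSubmodule]
    exact isHomogeneous_X_pow _ _⟩
  apply aux_projective (rhoV p) (auxLam p) w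
  intro v
  rw [← sub_eq_zero]
  apply Subtype.ext
  apply aux_ext p ((mem_homogeneousSubmodule _ _).mp (Subtype.property _))
  intro h
  rw [← auxLam_rho, map_sub, map_sub, sub_eq_zero, map_sum, map_sum]
  have hw : ∀ g : GL (Fin 2) (ZMod p), auxLam p (rhoV p g w) = (g.val 0 0) ^ (p - 1) := by
    intro g
    rw [auxLam_rho]
    simp [w]
  have hcore := aux_core p ((mem_homogeneousSubmodule _ _).mp (rhoV p h v).property)
  have h1 : auxLam p (rhoV p h v) = eval ![1, 0] (rhoV p h v : MvPolynomial (Fin 2) (ZMod p)) := by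
    show aeval (![1, 0] : Fin 2 → ZMod p) _ = _
    rw [aeval_eq_eval]
    rfl
  rw [h1, ← hcore]
  refine Fintype.sum_bijective (fun g => (h * g)⁻¹)
    ((Equiv.mulLeft h).trans (Equiv.inv _)).bijective _ _ fun g => ?_
  rw [map_smul (rhoV p h), map_smul (auxLam p), smul_eq_mul, ← auxLam_rho, inv_inv, ← hw (h * g)]
  have e1 : rhoV p (h * g)⁻¹ (rhoV p h v) = rhoV p g⁻¹ v := by
    rw [← Module.End.mul_apply, ← map_mul (rhoV p)]
    simp
  have e2 : rhoV p (h * g) w = rhoV p h (rhoV p g w) := by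
    rw [map_mul (rhoV p), Module.End.mul_apply]
  rw [e1, e2]
end
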